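/- For μ ∈ (0,1) and any s ≥ 0, the integral identity ∫₀^∞ (sin(πμ)/(πμ)) · 1/(y² + 2y cos(πμ) + 1) · 1/(1 + s·y^{1/μ}) dy = 1/(1+s^μ) holds. -/

import Mathlib

open MeasureTheory Real

/-!
Substituting `y = exp (μ t)` turns the kernel into `sin θ / (cosh (μ t) + cos θ)` with `θ = π μ`.
Up to a factor `I`, this is the jump of `w ↦ 1 / (1 + exp (μ w))` between the boundary lines of the
strip `|im w| ≤ π`, on which `exp` takes the same values `-exp t`. Write `s = exp (-a)`. Dividing
`1 / (1 + exp (μ w)) - 1 / (1 + exp (μ a))`, which vanishes at `a`, by `1 - exp (w - a)` gives a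
function holomorphic on the strip, whose jump is the integrand. Cauchy's theorem evaluates the
integral of the jump from the limits at the two ends of the strip.
-/

open Filter Topology

section Strip

/-- The closed horizontal strip about the real axis of half-width `c`, the domain on which
Cauchy's theorem is applied. -/
def horizontalStrip (c : ℝ) : Set ℂ := {w | |w.im| ≤ c}

theorem mem_horizontalStrip {c : ℝ} {w : ℂ} : w ∈ horizontalStrip c ↔ |w.im| ≤ c := Iff.rfl

theorem preimage_im_uIcc_eq_horizontalStrip {c : ℝ} (hc : 0 ≤ c) :
    Complex.im ⁻¹' Set.uIcc (-c) c = horizontalStrip c := by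
  ext w
  rw [Set.uIcc_of_le (by linarith), mem_horizontalStrip, abs_le, Set.mem_preimage, Set.mem_Icc]

theorem horizontalStrip_mem_nhds {c : ℝ} {a : ℂ} (ha : |a.im| < c) : horizontalStrip c ∈ 𝓝 a :=
  (by fun_prop : ContinuousAt (fun w : ℂ => |w.im|) a).eventually_le_const ha

theorem add_mul_I_mem_horizontalStrip {c : ℝ} (hc : 0 ≤ c) (x : ℝ) :
    (x + c * Complex.I : ℂ) ∈ horizontalStrip c := by
  simp [mem_horizontalStrip, abs_of_nonneg hc]

theorem sub_mul_I_mem_horizontalStrip {c : ℝ} (hc : 0 ≤ c) (x : ℝ) :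
    (x - c * Complex.I : ℂ) ∈ horizontalStrip c := by
  simp [mem_horizontalStrip, abs_of_nonneg hc]

variable {E : Type*} [NormedAddCommGroup E] [NormedSpace ℂ E] [CompleteSpace E]

theorem tendsto_intervalIntegral_vertical {G : ℂ → E} {a b : ℝ} {l : E} {F : Filter ℝ}
    [F.IsCountablyGenerated] (hcont : ContinuousOn G (Complex.im ⁻¹' Set.uIcc a b))
    (hG : Tendsto G (comap Complex.re F ⊓ 𝓟 (Complex.im ⁻¹' Set.uIcc a b)) (𝓝 l)) :
    Tendsto (fun x : ℝ => ∫ y in a..b, G (x + y * Complex.I)) F (𝓝 ((b - a) • l)) := by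
  rw [← intervalIntegral.integral_const]
  refine TendstoUniformlyOn.tendsto_intervalIntegral_of_continuousOn ?_ ?_
  · exact .of_forall fun x => hcont.comp (by fun_prop) fun y hy => by simpa using hy
  · rw [tendstoUniformlyOn_iff_tendsto, ← Uniform.tendsto_nhds_right]
    refine hG.comp (tendsto_inf.2 ⟨?_, ?_⟩)
    · exact tendsto_comap_iff.2 (tendsto_fst.congr fun p => by simp)
    · exact tendsto_principal.2 ((tendsto_snd.eventually (mem_principal_self _)).mono fun p hp => by
        simpa using! hp)

variable {G : ℂ → E} {c : ℝ} {l r : E}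

theorem tendsto_intervalIntegral_horizontalStrip_jump (hc : 0 ≤ c)
    (hG : DifferentiableOn ℂ G (horizontalStrip c))
    (hr : Tendsto G (comap Complex.re atTop ⊓ 𝓟 (horizontalStrip c)) (𝓝 r))
    (hl : Tendsto G (comap Complex.re atBot ⊓ 𝓟 (horizontalStrip c)) (𝓝 l)) :
    Tendsto (fun R : ℝ => ∫ x in (-R)..R, (G (x - c * Complex.I) - G (x + c * Complex.I))) atTop
      (𝓝 ((2 * c * Complex.I) • (l - r))) := by
  have hlower (a b : ℝ) : IntervalIntegrable (fun x : ℝ => G (x - c * Complex.I)) volume a b :=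
    (hG.continuousOn.comp_continuous (by fun_prop)
      (sub_mul_I_mem_horizontalStrip hc)).intervalIntegrable a b
  have hupper (a b : ℝ) : IntervalIntegrable (fun x : ℝ => G (x + c * Complex.I)) volume a b :=
    (hG.continuousOn.comp_continuous (by fun_prop)
      (add_mul_I_mem_horizontalStrip hc)).intervalIntegrable a b
  rw [← preimage_im_uIcc_eq_horizontalStrip hc] at hG hr hl
  have hright := (tendsto_intervalIntegral_vertical hG.continuousOn hr).comp tendsto_id
  have hleft := (tendsto_intervalIntegral_vertical hG.continuousOn hl).comp tendsto_neg_atTop_atBot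
  have hlim : Complex.I • ((c - -c) • l - (c - -c) • r) = (2 * c * Complex.I) • (l - r) := by
    rw [← smul_sub, ← Complex.coe_smul, smul_smul]
    congr 1
    push_cast
    ring
  rw [← hlim]
  refine ((hleft.sub hright).const_smul Complex.I).congr fun R => ?_
  have cauchy := Complex.integral_boundary_rect_eq_zero_of_differentiableOn G
    (⟨-R, -c⟩ : ℂ) (⟨R, c⟩ : ℂ) (hG.mono fun w hw => hw.2)
  simp only [Complex.ofReal_neg, neg_mul, ← sub_eq_add_neg] at cauchy
  rw [intervalIntegral.integral_sub (hlower _ _) (hupper _ _), eq_comm, ← sub_eq_zero, ← cauchy]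
  simp only [Function.comp_apply, id, smul_sub, Complex.ofReal_neg]
  abel

theorem integral_horizontalStrip_jump (hc : 0 ≤ c)
    (hG : DifferentiableOn ℂ G (horizontalStrip c))
    (hr : Tendsto G (comap Complex.re atTop ⊓ 𝓟 (horizontalStrip c)) (𝓝 r))
    (hl : Tendsto G (comap Complex.re atBot ⊓ 𝓟 (horizontalStrip c)) (𝓝 l))
    (hint : Integrable fun x : ℝ => G (x - c * Complex.I) - G (x + c * Complex.I)) :
    ∫ x : ℝ, (G (x - c * Complex.I) - G (x + c * Complex.I)) = (2 * c * Complex.I) • (l - r) :=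
  tendsto_nhds_unique
    (intervalIntegral_tendsto_integral hint tendsto_neg_atTop_atBot tendsto_id)
    (tendsto_intervalIntegral_horizontalStrip_jump hc hG hr hl)

end Strip

section RemovableQuotient

theorem inv_dslope_smul_dslope_of_ne {𝕜 : Type*} [NontriviallyNormedField 𝕜] {F : Type*}
    [NormedAddCommGroup F] [NormedSpace 𝕜 F] (h : 𝕜 → 𝕜) (g : 𝕜 → F) {a w : 𝕜} (hw : w ≠ a) :
    (dslope h a w)⁻¹ • dslope g a w = (h w - h a)⁻¹ • (g w - g a) := by
  have := sub_ne_zero.2 hw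
  rw [dslope_of_ne _ hw, dslope_of_ne _ hw, slope_def_field, slope_def_module, smul_smul]
  congr 1
  field_simp

theorem differentiableOn_inv_dslope_smul_dslope {E : Type*} [NormedAddCommGroup E]
    [NormedSpace ℂ E] [CompleteSpace E] {h : ℂ → ℂ} {g : ℂ → E} {S : Set ℂ} {a : ℂ} (hS : S ∈ 𝓝 a)
    (hh : DifferentiableOn ℂ h S) (hg : DifferentiableOn ℂ g S)
    (hne : ∀ w ∈ S, h w = h a → w = a) (hderiv : deriv h a ≠ 0) :
    DifferentiableOn ℂ (fun w => (dslope h a w)⁻¹ • dslope g a w) S := by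
  refine .smul (((Complex.differentiableOn_dslope hS).2 hh).inv fun w hw => ?_)
    ((Complex.differentiableOn_dslope hS).2 hg)
  rcases eq_or_ne w a with rfl | hwa
  · rwa [dslope_same]
  · rw [dslope_of_ne _ hwa, slope_def_field]
    exact div_ne_zero (sub_ne_zero.2 (mt (hne w hw) hwa)) (sub_ne_zero.2 hwa)

end RemovableQuotient

section FermiDirac

theorem cos_half_im_mul_le_norm_one_add_exp (z : ℂ) :
    Real.cos (z.im / 2) * (1 + Real.exp z.re) ≤ ‖1 + Complex.exp z‖ := by
  -- Rotating by half the argument makes the two summands conjugate in direction.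
  have hrot : Complex.exp ((-(z.im / 2) : ℝ) * Complex.I) * (1 + Complex.exp z) =
      Complex.exp ((-(z.im / 2) : ℝ) * Complex.I) +
        Complex.exp (z.re + (z.im / 2 : ℝ) * Complex.I) := by
    rw [mul_add, mul_one, ← Complex.exp_add]
    nth_rw 3 [← Complex.re_add_im z]
    push_cast
    ring_nf
  calc
    _ = (Complex.exp ((-(z.im / 2) : ℝ) * Complex.I) * (1 + Complex.exp z)).re := by
      rw [hrot, Complex.add_re, Complex.exp_ofReal_mul_I_re, Complex.exp_add, ← Complex.ofReal_exp,
        Complex.re_ofReal_mul, Complex.exp_ofReal_mul_I_re, Real.cos_neg]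
      ring
    _ ≤ ‖Complex.exp ((-(z.im / 2) : ℝ) * Complex.I) * (1 + Complex.exp z)‖ :=
      Complex.re_le_norm _
    _ = ‖1 + Complex.exp z‖ := by rw [norm_mul, Complex.norm_exp_ofReal_mul_I, one_mul]

theorem cos_half_pos {θ : ℝ} (hθ : |θ| < π) : 0 < Real.cos (θ / 2) :=
  Real.cos_pos_of_mem_Ioo ⟨by linarith [(abs_lt.1 hθ).1], by linarith [(abs_lt.1 hθ).2]⟩

theorem one_add_exp_ne_zero {z : ℂ} (hz : |z.im| < π) : 1 + Complex.exp z ≠ 0 :=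
  norm_pos_iff.1 ((mul_pos (cos_half_pos hz) (by positivity)).trans_le
    (cos_half_im_mul_le_norm_one_add_exp z))

/-- The Fermi–Dirac function `1 / (1 + exp z)`: it supplies both `1 / (1 + s * exp t)`, by a
translation, and the function whose jump across a strip is the kernel, by a dilation. -/
noncomputable def fermiDirac (z : ℂ) : ℂ := (1 + Complex.exp z)⁻¹

theorem differentiableAt_fermiDirac {z : ℂ} (hz : |z.im| < π) : DifferentiableAt ℂ fermiDirac z :=
  (by fun_prop : DifferentiableAt ℂ (fun z => 1 + Complex.exp z) z).inv (one_add_exp_ne_zero hz)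

theorem norm_fermiDirac_le {z : ℂ} (hz : |z.im| < π) :
    ‖fermiDirac z‖ ≤ (Real.cos (z.im / 2))⁻¹ := by
  have hcos := cos_half_pos hz
  rw [fermiDirac, norm_inv]
  gcongr
  exact (le_mul_of_one_le_right hcos.le (by linarith [Real.exp_pos z.re])).trans
    (cos_half_im_mul_le_norm_one_add_exp z)

theorem tendsto_fermiDirac_comap_re_atTop : Tendsto fermiDirac (comap Complex.re atTop) (𝓝 0) :=
  tendsto_inv₀_cobounded.comp
    ((tendsto_const_add_cobounded 1).comp Complex.tendsto_exp_comap_re_atTop)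

theorem tendsto_fermiDirac_comap_re_atBot : Tendsto fermiDirac (comap Complex.re atBot) (𝓝 1) := by
  have := (Complex.tendsto_exp_comap_re_atBot.const_add 1).inv₀ (by simp)
  rwa [add_zero, inv_one] at this

theorem fermiDirac_sub_pi_mul_I (z : ℂ) :
    fermiDirac (z - π * Complex.I) = (1 - Complex.exp z)⁻¹ := by
  rw [fermiDirac, Complex.exp_sub, Complex.exp_pi_mul_I, div_neg, div_one, ← sub_eq_add_neg]

theorem tendsto_fermiDirac_sub_comap_re_atTop (b : ℂ) :
    Tendsto (fun w => fermiDirac (w - b)) (comap Complex.re atTop) (𝓝 0) := by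
  refine tendsto_fermiDirac_comap_re_atTop.comp (tendsto_comap_iff.2 ?_)
  exact (tendsto_atTop_add_const_right _ (-b.re) tendsto_comap).congr fun w => by
    simp [sub_eq_add_neg]

theorem tendsto_fermiDirac_sub_comap_re_atBot (b : ℂ) :
    Tendsto (fun w => fermiDirac (w - b)) (comap Complex.re atBot) (𝓝 1) := by
  refine tendsto_fermiDirac_comap_re_atBot.comp (tendsto_comap_iff.2 ?_)
  exact (tendsto_atBot_add_const_right _ (-b.re) tendsto_comap).congr fun w => by
    simp [sub_eq_add_neg]

theorem fermiDirac_periodic : Function.Periodic fermiDirac (2 * π * Complex.I) :=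
  Complex.exp_periodic.comp fun z => (1 + z)⁻¹

theorem one_sub_fermiDirac {z : ℂ} (hz : |z.im| < π) : 1 - fermiDirac z = fermiDirac (-z) := by
  have h1 := one_add_exp_ne_zero hz
  have h2 : 1 + Complex.exp (-z) ≠ 0 := one_add_exp_ne_zero (by simpa using hz)
  have h3 : Complex.exp z * Complex.exp (-z) = 1 := by simp [← Complex.exp_add]
  rw [fermiDirac, fermiDirac]
  field_simp
  linear_combination h3

theorem fermiDirac_jump {x θ : ℝ} (hθ : |θ| < π) :
    fermiDirac (x - θ * Complex.I) - fermiDirac (x + θ * Complex.I) =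
      Complex.I * (Real.sin θ / (Real.cosh x + Real.cos θ) : ℝ) := by
  have hlower : 1 + Complex.exp (x - θ * Complex.I) ≠ 0 := one_add_exp_ne_zero (by simpa)
  have hupper : 1 + Complex.exp (x + θ * Complex.I) ≠ 0 := one_add_exp_ne_zero (by simpa)
  have hexp (φ : ℝ) : Complex.exp (x + φ * Complex.I) =
      Complex.exp x * (Complex.cos φ + Complex.sin φ * Complex.I) := by
    rw [Complex.exp_add, Complex.exp_mul_I]
  have hexp_neg : Complex.exp (x - θ * Complex.I) =
      Complex.exp x * (Complex.cos θ - Complex.sin θ * Complex.I) := by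
    simpa [← sub_eq_add_neg] using hexp (-θ)
  have hprod : (1 + Complex.exp (x - θ * Complex.I)) * (1 + Complex.exp (x + θ * Complex.I)) =
      2 * Complex.exp x * (Complex.cosh x + Complex.cos θ) := by
    have hinv : Complex.exp x * Complex.exp (-x) = 1 := by simp [← Complex.exp_add]
    rw [hexp_neg, hexp, Complex.cosh]
    linear_combination Complex.exp x ^ 2 * Complex.sin_sq_add_cos_sq θ -
      Complex.exp x ^ 2 * Complex.sin θ ^ 2 * Complex.I_sq - hinv
  have hdiff : Complex.exp (x + θ * Complex.I) - Complex.exp (x - θ * Complex.I) =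
      2 * Complex.exp x * (Complex.sin θ * Complex.I) := by
    rw [hexp, hexp_neg]
    ring
  rw [fermiDirac, fermiDirac, inv_sub_inv hlower hupper, hprod, add_sub_add_left_eq_sub, hdiff,
    mul_div_mul_left _ _ (by simp)]
  push_cast
  ring

end FermiDirac

section Jump

variable {E : Type*} [NormedAddCommGroup E] [NormedSpace ℂ E]

theorem eq_zero_of_exp_eq_one {z : ℂ} (hz : |z.im| < 2 * π) (h : Complex.exp z = 1) : z = 0 := by
  obtain ⟨n, rfl⟩ := Complex.exp_eq_one_iff.1 h
  have hn : |(n : ℝ)| < 1 := by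
    have him : ((n : ℂ) * (2 * π * Complex.I)).im = n * (2 * π) := by simp
    rwa [him, abs_mul, abs_of_pos two_pi_pos, mul_lt_iff_lt_one_left two_pi_pos] at hz
  have hn0 : n = 0 := Int.abs_lt_one_iff.1 (by exact_mod_cast hn)
  simp [hn0]

/-- The quotient `(g w - g a) / (1 - exp (w - a))`, extended across its removable singularity at
`a`. On the lines `im w = ±π` its denominator is `1 + exp (re w - a)`. -/
noncomputable def expSlope (g : ℂ → E) (a w : ℂ) : E :=
  (dslope (fun w => -Complex.exp (w - a)) a w)⁻¹ • dslope g a w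

variable {g : ℂ → E} {a : ℂ} {l : E}

theorem expSlope_of_ne (g : ℂ → E) {w : ℂ} (hw : w ≠ a) :
    expSlope g a w = fermiDirac (w - (a + π * Complex.I)) • (g w - g a) := by
  rw [expSlope, inv_dslope_smul_dslope_of_ne _ _ hw, ← sub_sub, fermiDirac_sub_pi_mul_I, sub_self,
    Complex.exp_zero, neg_sub_neg]

theorem expSlope_jump (g : ℂ → E) (ha : |a.im| < π) (t : ℝ) :
    expSlope g a (t - π * Complex.I) - expSlope g a (t + π * Complex.I) =
      fermiDirac (t - a) • (g (t - π * Complex.I) - g (t + π * Complex.I)) := by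
  have hlower : (t - π * Complex.I : ℂ) ≠ a := by
    rintro rfl
    simp [abs_of_pos pi_pos] at ha
  have hupper : (t + π * Complex.I : ℂ) ≠ a := by
    rintro rfl
    simp [abs_of_pos pi_pos] at ha
  have hperiod : fermiDirac (t - π * Complex.I - (a + π * Complex.I)) = fermiDirac (t - a) := by
    rw [← fermiDirac_periodic.sub_eq (t - a)]
    ring_nf
  rw [expSlope_of_ne g hlower, expSlope_of_ne g hupper, hperiod, add_sub_add_right_eq_sub,
    ← smul_sub, sub_sub_sub_cancel_right]

theorem tendsto_expSlope_comap_re_atTop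
    (hg : IsBoundedUnder (· ≤ ·) (comap Complex.re atTop ⊓ 𝓟 (horizontalStrip π)) (norm ∘ g)) :
    Tendsto (expSlope g a) (comap Complex.re atTop ⊓ 𝓟 (horizontalStrip π)) (𝓝 0) := by
  have hne : ∀ᶠ w in comap Complex.re atTop, w ≠ a :=
    (tendsto_comap.eventually (eventually_ne_atTop a.re)).mono fun w => ne_of_apply_ne Complex.re
  have hf := (tendsto_fermiDirac_sub_comap_re_atTop (a + π * Complex.I)).mono_left
    (inf_le_left (b := 𝓟 (horizontalStrip π)))
  have hlim := (hf.zero_smul_isBoundedUnder_le hg).sub (hf.smul_const (g a))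
  rw [zero_smul, sub_zero] at hlim
  refine hlim.congr' ((hne.filter_mono inf_le_left).mono fun w hw => ?_)
  rw [expSlope_of_ne g hw, smul_sub]

theorem tendsto_expSlope_comap_re_atBot
    (hg : Tendsto g (comap Complex.re atBot ⊓ 𝓟 (horizontalStrip π)) (𝓝 l)) :
    Tendsto (expSlope g a) (comap Complex.re atBot ⊓ 𝓟 (horizontalStrip π)) (𝓝 (l - g a)) := by
  have hne : ∀ᶠ w in comap Complex.re atBot, w ≠ a :=
    (tendsto_comap.eventually (eventually_ne_atBot a.re)).mono fun w => ne_of_apply_ne Complex.re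
  have hf := (tendsto_fermiDirac_sub_comap_re_atBot (a + π * Complex.I)).mono_left
    (inf_le_left (b := 𝓟 (horizontalStrip π)))
  have hlim := hf.smul (hg.sub_const (g a))
  rw [one_smul] at hlim
  exact hlim.congr' ((hne.filter_mono inf_le_left).mono fun w hw => (expSlope_of_ne g hw).symm)

variable [CompleteSpace E]

theorem differentiableOn_expSlope (ha : |a.im| < π)
    (hg : DifferentiableOn ℂ g (horizontalStrip π)) :
    DifferentiableOn ℂ (expSlope g a) (horizontalStrip π) := by
  refine differentiableOn_inv_dslope_smul_dslope (horizontalStrip_mem_nhds ha)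
    (by fun_prop) hg (fun w hw hwa => ?_) ?_
  · refine sub_eq_zero.1 (eq_zero_of_exp_eq_one ?_ (by simpa using hwa))
    rw [Complex.sub_im, two_mul]
    exact (abs_sub _ _).trans_lt (add_lt_add_of_le_of_lt hw ha)
  · have : HasDerivAt (fun w => -Complex.exp (w - a)) (-(Complex.exp (a - a) * 1)) a :=
      ((hasDerivAt_id a).sub_const a).cexp.neg
    simp [this.deriv]

theorem integral_fermiDirac_smul_jump (ha : |a.im| < π)
    (hg : DifferentiableOn ℂ g (horizontalStrip π))
    (hr : IsBoundedUnder (· ≤ ·) (comap Complex.re atTop ⊓ 𝓟 (horizontalStrip π)) (norm ∘ g))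
    (hl : Tendsto g (comap Complex.re atBot ⊓ 𝓟 (horizontalStrip π)) (𝓝 l))
    (hint : Integrable fun t : ℝ => g (t - π * Complex.I) - g (t + π * Complex.I)) :
    ∫ t : ℝ, fermiDirac (t - a) • (g (t - π * Complex.I) - g (t + π * Complex.I)) =
      (2 * π * Complex.I) • (l - g a) := by
  have him (t : ℝ) : |(t - a : ℂ).im| < π := by simpa using ha
  have hcont : Continuous fun t : ℝ => fermiDirac (t - a) := continuous_iff_continuousAt.2 fun t =>
    ContinuousAt.comp (g := fermiDirac) (differentiableAt_fermiDirac (him t)).continuousAt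
      (by fun_prop)
  have hbound (t : ℝ) : ‖fermiDirac (t - a)‖ ≤ (Real.cos (a.im / 2))⁻¹ := by
    simpa [neg_div] using norm_fermiDirac_le (him t)
  have key := integral_horizontalStrip_jump pi_pos.le (differentiableOn_expSlope ha hg)
    (tendsto_expSlope_comap_re_atTop hr) (tendsto_expSlope_comap_re_atBot hl)
  simp only [expSlope_jump g ha, sub_zero] at key
  exact key (hint.bdd_smul _ hcont.aestronglyMeasurable (.of_forall hbound))

end Jump

section Kernel

theorem cosh_add_cos_pos {θ : ℝ} (hθ : |θ| < π) (x : ℝ) : 0 < Real.cosh x + Real.cos θ := by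
  have hcos : Real.cos π < Real.cos |θ| :=
    Real.cos_lt_cos_of_nonneg_of_le_pi (abs_nonneg θ) le_rfl hθ
  rw [Real.cos_pi, Real.cos_abs] at hcos
  linarith [Real.one_le_cosh x]

theorem tendsto_intervalIntegral_sin_div_cosh_add_cos {θ : ℝ} (h0 : 0 ≤ θ) (hθ : θ < π) :
    Tendsto (fun R : ℝ => ∫ x in (-R)..R, Real.sin θ / (Real.cosh x + Real.cos θ)) atTop
      (𝓝 (2 * θ)) := by
  have hd : DifferentiableOn ℂ fermiDirac (horizontalStrip θ) := fun z hz =>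
    (differentiableAt_fermiDirac (lt_of_le_of_lt hz hθ)).differentiableWithinAt
  have hlim := tendsto_intervalIntegral_horizontalStrip_jump h0 hd
    (tendsto_fermiDirac_comap_re_atTop.mono_left inf_le_left)
    (tendsto_fermiDirac_comap_re_atBot.mono_left inf_le_left)
  simp only [fermiDirac_jump (by rwa [abs_of_nonneg h0]), intervalIntegral.integral_const_mul,
    intervalIntegral.integral_ofReal] at hlim
  simpa [Function.comp_def] using (Complex.continuous_im.tendsto _).comp hlim

theorem integrable_sin_div_cosh_add_cos {θ : ℝ} (h0 : 0 ≤ θ) (hθ : θ < π) :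
    Integrable fun x : ℝ => Real.sin θ / (Real.cosh x + Real.cos θ) := by
  have hpos := cosh_add_cos_pos (θ := θ) (by rwa [abs_of_nonneg h0])
  have hcont : Continuous fun x : ℝ => Real.sin θ / (Real.cosh x + Real.cos θ) :=
    continuous_const.div (by fun_prop) fun x => (hpos x).ne'
  refine integrable_of_intervalIntegral_norm_tendsto (2 * θ) (fun R => hcont.integrableOn_Ioc)
    tendsto_neg_atTop_atBot tendsto_id ?_
  simpa only [id, Real.norm_of_nonneg (div_nonneg (Real.sin_nonneg_of_nonneg_of_le_pi h0 hθ.le)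
    (hpos _).le)] using tendsto_intervalIntegral_sin_div_cosh_add_cos h0 hθ

theorem integral_sin_div_cosh_add_cos {θ : ℝ} (h0 : 0 ≤ θ) (hθ : θ < π) :
    ∫ x : ℝ, Real.sin θ / (Real.cosh x + Real.cos θ) = 2 * θ :=
  tendsto_nhds_unique
    (intervalIntegral_tendsto_integral (integrable_sin_div_cosh_add_cos h0 hθ)
      tendsto_neg_atTop_atBot tendsto_id)
    (tendsto_intervalIntegral_sin_div_cosh_add_cos h0 hθ)

theorem integral_sin_div_cosh_add_cos_mul_fermiDirac {μ : ℝ} (hμ : μ ∈ Set.Ioo 0 1) {a : ℂ}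
    (ha : |a.im| < π) :
    ∫ t : ℝ, ((Real.sin (π * μ) / (Real.cosh (μ * t) + Real.cos (π * μ)) : ℝ) : ℂ) *
      fermiDirac (t - a) = 2 * π * fermiDirac (-(μ * a)) := by
  obtain ⟨h0, h1⟩ := hμ
  have hθ0 : 0 < π * μ := mul_pos pi_pos h0
  have hθ : π * μ < π := mul_lt_of_lt_one_right pi_pos h1
  have him {w : ℂ} (hw : |w.im| ≤ π) : |(μ * w).im| < π := by
    rw [Complex.im_ofReal_mul, abs_mul, abs_of_pos h0, mul_comm]
    exact (mul_le_mul_of_nonneg_right hw h0.le).trans_lt hθ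
  have hd : DifferentiableOn ℂ (fun w => fermiDirac (μ * w)) (horizontalStrip π) := fun w hw =>
    ((differentiableAt_fermiDirac (him hw)).comp w (by fun_prop)).differentiableWithinAt
  have hr : Tendsto (fun w => fermiDirac (μ * w)) (comap Complex.re atTop) (𝓝 0) := by
    refine tendsto_fermiDirac_comap_re_atTop.comp (tendsto_comap_iff.2 ?_)
    exact (tendsto_comap.const_mul_atTop h0).congr fun w => by simp
  have hl : Tendsto (fun w => fermiDirac (μ * w)) (comap Complex.re atBot) (𝓝 1) := by
    refine tendsto_fermiDirac_comap_re_atBot.comp (tendsto_comap_iff.2 ?_)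
    exact (tendsto_comap.const_mul_atBot h0).congr fun w => by simp
  have hjump (t : ℝ) :
      fermiDirac (μ * (t - π * Complex.I)) - fermiDirac (μ * (t + π * Complex.I)) =
        Complex.I * (Real.sin (π * μ) / (Real.cosh (μ * t) + Real.cos (π * μ)) : ℝ) := by
    rw [← fermiDirac_jump (by rwa [abs_of_pos hθ0])]
    push_cast
    ring_nf
  have hint : Integrable fun t : ℝ =>
      fermiDirac (μ * (t - π * Complex.I)) - fermiDirac (μ * (t + π * Complex.I)) := by
    simp only [hjump]
    exact ((integrable_sin_div_cosh_add_cos hθ0.le hθ).comp_mul_left' h0.ne').ofReal.const_mul _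
  have key := integral_fermiDirac_smul_jump ha hd
    (hr.mono_left inf_le_left).norm.isBoundedUnder_le (hl.mono_left inf_le_left) hint
  simp only [hjump, smul_eq_mul, mul_left_comm _ Complex.I, integral_const_mul,
    one_sub_fermiDirac (him ha.le)] at key
  apply mul_left_cancel₀ Complex.I_ne_zero
  rw [← mul_assoc, mul_comm Complex.I (2 * π : ℂ), ← key]
  simp only [mul_comm]

theorem integral_sin_div_cosh_add_cos_mul_inv_one_add_mul_exp {μ : ℝ} (hμ : μ ∈ Set.Ioo 0 1)
    {s : ℂ} (hs : s.arg ≠ π) :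
    ∫ t : ℝ, ((Real.sin (π * μ) / (Real.cosh (μ * t) + Real.cos (π * μ)) : ℝ) : ℂ) *
      (1 + s * (Real.exp t : ℝ))⁻¹ = 2 * π * (1 + s ^ (μ : ℂ))⁻¹ := by
  obtain ⟨h0, h1⟩ := hμ
  rcases eq_or_ne s 0 with rfl | hs0
  · have hmass : ∫ t : ℝ, Real.sin (π * μ) / (Real.cosh (μ * t) + Real.cos (π * μ)) = 2 * π := by
      rw [Measure.integral_comp_mul_left
        (fun x => Real.sin (π * μ) / (Real.cosh x + Real.cos (π * μ))),
        integral_sin_div_cosh_add_cos (by positivity) (mul_lt_of_lt_one_right pi_pos h1),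
        abs_of_pos (inv_pos.2 h0), smul_eq_mul]
      field_simp
    simp [-Complex.ofReal_div, integral_complex_ofReal, hmass, h0.ne']
  · have ha : |(-Complex.log s).im| < π := by
      rw [Complex.neg_im, abs_neg, Complex.log_im]
      exact abs_lt.2 ⟨Complex.neg_pi_lt_arg s, (Complex.arg_le_pi s).lt_of_ne hs⟩
    have key := integral_sin_div_cosh_add_cos_mul_fermiDirac ⟨h0, h1⟩ ha
    have hkernel (t : ℝ) : fermiDirac (t - -Complex.log s) = (1 + s * (Real.exp t : ℝ))⁻¹ := by
      rw [fermiDirac, sub_neg_eq_add, Complex.exp_add, Complex.exp_log hs0, mul_comm,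
        Complex.ofReal_exp]
    have hvalue : fermiDirac (-(μ * -Complex.log s)) = (1 + s ^ (μ : ℂ))⁻¹ := by
      rw [fermiDirac, mul_neg, neg_neg, mul_comm, Complex.cpow_def_of_ne_zero hs0]
    simpa only [hkernel, hvalue] using key

end Kernel

theorem integral_Ioi_inv_quadratic_smul_comp_rpow {E : Type*} [NormedAddCommGroup E]
    [NormedSpace ℝ E] {μ : ℝ} (hμ : 0 < μ) (c : ℝ) (f : ℝ → E) :
    ∫ y in Set.Ioi (0 : ℝ), (1 / (y ^ 2 + 2 * y * c + 1)) • f (y ^ (1 / μ)) =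
      (μ / 2) • ∫ t : ℝ, (1 / (Real.cosh (μ * t) + c)) • f (Real.exp t) := by
  have himage : (fun t => Real.exp (μ * t)) '' Set.univ = Set.Ioi 0 := by
    rw [Set.image_univ, ← Real.range_exp]
    exact (mul_left_surjective₀ hμ.ne').range_comp Real.exp
  rw [← himage, integral_image_eq_integral_abs_deriv_smul (f := fun t => Real.exp (μ * t))
    (f' := fun t => Real.exp (μ * t) * μ) MeasurableSet.univ
    (fun t _ => HasDerivAt.hasDerivWithinAt (by
      simpa using ((hasDerivAt_id t).const_mul μ).exp))
    ((Real.exp_injective.comp (mul_right_injective₀ hμ.ne')).injOn), setIntegral_univ,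
    ← integral_smul]
  congr 1 with t
  have hcosh : Real.exp (μ * t) ^ 2 + 2 * Real.exp (μ * t) * c + 1 =
      2 * Real.exp (μ * t) * (Real.cosh (μ * t) + c) := by
    have hinv : Real.exp (μ * t) * Real.exp (-(μ * t)) = 1 := by simp [← Real.exp_add]
    rw [Real.cosh_eq]
    linear_combination -hinv
  have hroot : Real.exp (μ * t) ^ (1 / μ) = Real.exp t := by
    rw [← Real.exp_mul]
    field_simp
  simp only [hroot, hcosh, smul_smul]
  rw [abs_of_pos (by positivity)]
  congr 1
  have := Real.exp_ne_zero (μ * t)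
  rw [← div_div]
  field_simp

/-- Since `arg 0 = 0`, the condition on `s` says that it lies off the open negative half-line. -/
theorem stieltjes_integral_identity_general {μ : ℝ} (hμ : μ ∈ Set.Ioo 0 1) {s : ℂ}
    (hs : s.arg ≠ π) :
    ∫ y in Set.Ioi (0 : ℝ),
      ((Real.sin (π * μ) / (π * μ) * (1 / (y ^ 2 + 2 * y * Real.cos (π * μ) + 1)) : ℝ) : ℂ) *
        (1 / (1 + s * (y ^ (1 / μ) : ℝ))) = 1 / (1 + s ^ (μ : ℂ)) := by
  obtain ⟨h0, h1⟩ := hμ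
  have hπ : (π : ℂ) ≠ 0 := by exact_mod_cast pi_ne_zero
  have hμ0 : (μ : ℂ) ≠ 0 := by exact_mod_cast h0.ne'
  calc
    _ = ∫ y in Set.Ioi (0 : ℝ), (1 / (y ^ 2 + 2 * y * Real.cos (π * μ) + 1)) •
          (((Real.sin (π * μ) / (π * μ) : ℝ) : ℂ) * (1 + s * (y ^ (1 / μ) : ℝ))⁻¹) := by
      congr 1 with y
      rw [Complex.real_smul]
      push_cast
      ring
    _ = (μ / 2) • ∫ t : ℝ, (1 / (Real.cosh (μ * t) + Real.cos (π * μ))) •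
          (((Real.sin (π * μ) / (π * μ) : ℝ) : ℂ) * (1 + s * (Real.exp t : ℝ))⁻¹) :=
      integral_Ioi_inv_quadratic_smul_comp_rpow h0 _ fun x =>
        ((Real.sin (π * μ) / (π * μ) : ℝ) : ℂ) * (1 + s * (x : ℂ))⁻¹
    _ = (2 * π : ℂ)⁻¹ * ∫ t : ℝ,
          ((Real.sin (π * μ) / (Real.cosh (μ * t) + Real.cos (π * μ)) : ℝ) : ℂ) *
            (1 + s * (Real.exp t : ℝ))⁻¹ := by
      rw [← integral_smul, ← integral_const_mul]
      congr 1 with t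
      simp only [Complex.real_smul]
      push_cast
      field_simp
    _ = 1 / (1 + s ^ (μ : ℂ)) := by
      rw [integral_sin_div_cosh_add_cos_mul_inv_one_add_mul_exp ⟨h0, h1⟩ hs, one_div,
        inv_mul_cancel_left₀ (mul_ne_zero two_ne_zero hπ)]

theorem stieltjes_integral_identity
    (μ : ℝ) (hμ : μ ∈ Set.Ioo (0:ℝ) 1) (s : ℝ) (hs : 0 ≤ s) :
    ∫ y in Set.Ioi (0:ℝ),
      Real.sin (π * μ) / (π * μ) * (1 / (y ^ 2 + 2 * y * Real.cos (π * μ) + 1)) *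
        (1 / (1 + s * y ^ ((1:ℝ)/μ))) = 1 / (1 + s ^ μ) := by
  have key := stieltjes_integral_identity_general hμ (s := s)
    (by simpa [Complex.arg_ofReal_of_nonneg hs] using pi_ne_zero.symm)
  rw [← Complex.ofReal_cpow hs] at key
  exact_mod_cast key
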